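/- arXiv:2004.00169 — 5 statements merged into one kernel-verified Lean document; each statement's English description precedes it below -/
import Mathlib

section
/- Let k be an algebraically closed field of characteristic zero and let g be an N-dimensional Lie algebra over k with basis x_1, …, x_N and structure constants c_{ij}^l (so ⁅x_i, x_j⁆ = Σ_l c_{ij}^l x_l). Let M be the N×N 'commutator matrix' with entries M_{ij} = Σ_l c_{ij}^l X_l in the polynomial ring k[X_1, …, X_N] (equivalently, M_{ij} is the element ⁅x_i,x_j⁆ of g viewed inside the symmetric algebra Sym(g)). Then the index of g equals N minus the rank of M computed over the fraction field of k[X_1, …, X_N]; that is, min_{f ∈ g*} dim ker(B_f) = N − rank_{Frac(k[X_1,…,X_N])}(M). -/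
attribute [local instance 100] LieRing.ofAssociativeRing

/-- The kernel of the Kirillov form `B_f(x,y) = f ⁅x,y⁆` of a Lie algebra `L`,
namely `{y : L | ∀ x : L, f ⁅x, y⁆ = 0}`, as a submodule of `L`. -/
def kirillovKernel (k : Type*) {L : Type*} [Field k] [LieRing L] [LieAlgebra k L]
    (f : Module.Dual k L) : Submodule k L :=
  LinearMap.ker ((LinearMap.compr₂ (LieAlgebra.ad k L).toLinearMap f).flip)

theorem exists_rows_aux {K : Type*} [Field K] {m n : ℕ} (A : Matrix (Fin m) (Fin n) K)
    {s : ℕ} (hs : A.rank = s) :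
    ∃ r : Fin s → Fin m, LinearIndependent K (A.submatrix r id).row := by
  rw [A.rank_eq_finrank_span_row] at hs
  subst hs
  obtain ⟨f, hf, -, hli⟩ := Submodule.exists_fun_fin_finrank_span_eq K (Set.range A.row)
  choose r hr using hf
  refine ⟨r, ?_⟩
  have : (A.submatrix r id).row = f := by
    funext i
    rw [← hr i]
    rfl
  rw [this]
  exact hli

theorem exists_minor_aux {K : Type*} [Field K] {m n : ℕ} (A : Matrix (Fin m) (Fin n) K) :
    ∃ (r : Fin A.rank → Fin m) (c : Fin A.rank → Fin n), (A.submatrix r c).det ≠ 0 := by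
  obtain ⟨r, hr⟩ := exists_rows_aux A rfl
  have hrk : (A.submatrix r id).transpose.rank = A.rank := by
    rw [Matrix.rank_transpose, hr.rank_matrix, Fintype.card_fin]
  obtain ⟨c, hc⟩ := exists_rows_aux _ hrk
  refine ⟨r, c, ?_⟩
  have h2 := Matrix.linearIndependent_rows_iff_isUnit.mp hc
  rw [Matrix.isUnit_iff_isUnit_det] at h2
  have h3 : ((A.submatrix r id).transpose.submatrix c id) = (A.submatrix r c).transpose := rfl
  rw [h3, Matrix.det_transpose] at h2
  exact h2.ne_zero

theorem le_rank_of_minor_aux {K : Type*} [Field K] {m n s : ℕ} (A : Matrix (Fin m) (Fin n) K)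
    (r : Fin s → Fin m) (c : Fin s → Fin n) (h : (A.submatrix r c).det ≠ 0) : s ≤ A.rank := by
  have := A.rank_submatrix_le r c
  rwa [Matrix.rank_of_det_ne_zero h, Fintype.card_fin] at this

theorem finrank_kernel_aux {k : Type*} [Field k]
    {L : Type*} [LieRing L] [LieAlgebra k L] {N : ℕ} (x : Module.Basis (Fin N) k L)
    (M : Matrix (Fin N) (Fin N) (MvPolynomial (Fin N) k))
    (hM : ∀ i j, M i j =
      ∑ l : Fin N, MvPolynomial.C (x.repr ⁅x i, x j⁆ l) * MvPolynomial.X l)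
    (f : Module.Dual k L) :
    (M.map (MvPolynomial.eval (fun i => f (x i)))).rank
      + Module.finrank k (kirillovKernel k f) = N := by
  have : FiniteDimensional k L := x.finiteDimensional_of_finite
  set F := ((LinearMap.compr₂ (LieAlgebra.ad k L).toLinearMap f).flip) with hF
  have hmat : M.map (MvPolynomial.eval (fun i => f (x i))) =
      LinearMap.toMatrix x x.dualBasis F := by
    ext i j
    rw [LinearMap.toMatrix_apply, Module.Basis.dualBasis_repr, Matrix.map_apply, hM]
    have h1 : F (x j) (x i) = f ⁅x i, x j⁆ := rfl
    rw [h1]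
    have h2 := congrArg f (x.sum_repr ⁅x i, x j⁆)
    rw [← h2]
    simp only [map_sum, map_mul, map_smul, smul_eq_mul, MvPolynomial.eval_C, MvPolynomial.eval_X]
  rw [Matrix.rank_eq_finrank_range_toLin _ x.dualBasis x, hmat, Matrix.toLin_toMatrix]
  have := F.finrank_range_add_finrank_ker
  rw [Module.finrank_eq_card_basis x, Fintype.card_fin] at this
  exact this

/-- **Dixmier's index formula.** Let `k` be an algebraically closed field of characteristic
zero and `L` an `N`-dimensional Lie algebra over `k` with basis `x 0, …, x (N-1)`.  Let `M` be
the `N × N` commutator matrix, whose `(i,j)` entry is `⁅x i, x j⁆` written out in the basis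
with the basis vectors replaced by the polynomial variables `X l`, i.e.
`M i j = ∑ l, c_{ij}^l • X l ∈ k[X_1, …, X_N]`.  Then
`ind L = min_{f ∈ L*} dim ker B_f = N - rank M`, the rank being computed over the fraction
field of `k[X_1, …, X_N]`. -/
theorem index_eq_dim_sub_rank_commutator_matrix
    {k : Type*} [Field k] [IsAlgClosed k] [CharZero k]
    {L : Type*} [LieRing L] [LieAlgebra k L] {N : ℕ} (x : Module.Basis (Fin N) k L)
    (M : Matrix (Fin N) (Fin N) (MvPolynomial (Fin N) k))
    (hM : ∀ i j, M i j =
      ∑ l : Fin N, MvPolynomial.C (x.repr ⁅x i, x j⁆ l) * MvPolynomial.X l) :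
    (⨅ f : Module.Dual k L, Module.finrank k (kirillovKernel k f)) =
      N - (M.map (algebraMap (MvPolynomial (Fin N) k)
            (FractionRing (MvPolynomial (Fin N) k)))).rank := by
  set A := M.map (algebraMap (MvPolynomial (Fin N) k)
        (FractionRing (MvPolynomial (Fin N) k))) with hA
  have hdet : ∀ {s : ℕ} (r c : Fin s → Fin N),
      (A.submatrix r c).det = algebraMap (MvPolynomial (Fin N) k)
        (FractionRing (MvPolynomial (Fin N) k)) (M.submatrix r c).det := by
    intro s r c
    rw [RingHom.map_det]
    rfl
  have hdet2 : ∀ {s : ℕ} (v : Fin N → k) (r c : Fin s → Fin N),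
      ((M.map (MvPolynomial.eval v)).submatrix r c).det
        = MvPolynomial.eval v (M.submatrix r c).det := by
    intro s v r c
    rw [RingHom.map_det]
    rfl
  apply le_antisymm
  · obtain ⟨r, c, h⟩ := exists_minor_aux A
    rw [hdet] at h
    have h0 : (M.submatrix r c).det ≠ 0 := fun h0 => h (by rw [h0, map_zero])
    obtain ⟨v, hv⟩ : ∃ v : Fin N → k, MvPolynomial.eval v (M.submatrix r c).det ≠ 0 := by
      by_contra! hcon
      exact h0 (MvPolynomial.funext fun v => by rw [hcon v, map_zero])
    rw [← hdet2] at hv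
    have h1 := le_rank_of_minor_aux _ r c hv
    have h2 := finrank_kernel_aux x M hM (x.constr k v)
    simp only [Module.Basis.constr_basis] at h2
    refine (ciInf_le (OrderBot.bddBelow _) (x.constr k v)).trans ?_
    have h2' : (M.map (MvPolynomial.eval v)).rank
      + Module.finrank k (kirillovKernel k (x.constr k v)) = N := h2
    omega
  · apply le_ciInf
    intro f
    have h2 := finrank_kernel_aux x M hM f
    obtain ⟨r, c, h⟩ := exists_minor_aux (M.map (MvPolynomial.eval (fun i => f (x i))))
    rw [hdet2] at h
    have h0 : (A.submatrix r c).det ≠ 0 := by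
      rw [hdet]
      intro h0
      have h3 := (FaithfulSMul.algebraMap_eq_zero_iff (MvPolynomial (Fin N) k)
        (FractionRing (MvPolynomial (Fin N) k))).mp h0
      exact h (by rw [h3, map_zero])
    have h1 := le_rank_of_minor_aux A r c h0
    omega
end

section
/- Let k be an algebraically closed field of characteristic zero. For i = 1, 2 let g_i be a finite-dimensional semisimple Lie algebra over k, let b_i be a Borel subalgebra of g_i (a maximal solvable Lie subalgebra), let h_i ⊆ b_i be a Cartan subalgebra of g_i, and let p_i be a Lie subalgebra with h_i ⊆ p_i ⊆ b_i. Assume each p_i is Frobenius and two-step solvable. Then p_1 and p_2 are isomorphic as Lie algebras over k if and only if dim p_1 = dim p_2. -/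
/-- A Borel subalgebra: a maximal solvable Lie subalgebra. -/
def IsBorelSubalgebra (k : Type*) {g : Type*} [Field k] [LieRing g] [LieAlgebra k g]
    (b : LieSubalgebra k g) : Prop :=
  LieAlgebra.IsSolvable ↥b ∧
    ∀ c : LieSubalgebra k g, LieAlgebra.IsSolvable ↥c → b ≤ c → c = b

/-- A finite-dimensional Lie algebra is Frobenius if some functional `f` has nondegenerate
Kirillov form `B_f(x,y) = f ⁅x,y⁆`. -/
def IsFrobeniusLieAlgebra (k L : Type*) [Field k] [LieRing L] [LieAlgebra k L] : Prop :=
  ∃ f : Module.Dual k L, ∀ y : L, (∀ x : L, f ⁅x, y⁆ = 0) → y = 0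

/-- A Lie algebra is two-step solvable if `⁅L,L⁆ ≠ 0` and `⁅⁅L,L⁆,⁅L,L⁆⁆ = 0`. -/
def IsTwoStepSolvable (k L : Type*) [Field k] [LieRing L] [LieAlgebra k L] : Prop :=
  LieAlgebra.derivedSeries k L 1 ≠ ⊥ ∧ LieAlgebra.derivedSeries k L 2 = ⊥

/-- Structure constants of a direct sum of `n` copies of the nonabelian 2-dimensional algebra. -/
def IsStdAffBasis {k L : Type*} [Field k] [LieRing L] [LieAlgebra k L] {n : ℕ}
    (b : Module.Basis (Fin n ⊕ Fin n) k L) : Prop :=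
  (∀ i j, ⁅b (Sum.inl i), b (Sum.inl j)⁆ = 0) ∧ (∀ i j, ⁅b (Sum.inr i), b (Sum.inr j)⁆ = 0) ∧
    ∀ i j, ⁅b (Sum.inl i), b (Sum.inr j)⁆ = if i = j then b (Sum.inr j) else 0

theorem nonempty_lieEquiv_of_std {k L M : Type*} [Field k] [LieRing L] [LieAlgebra k L]
    [LieRing M] [LieAlgebra k M] {n : ℕ}
    (b : Module.Basis (Fin n ⊕ Fin n) k L) (c : Module.Basis (Fin n ⊕ Fin n) k M)
    (hb : IsStdAffBasis b) (hc : IsStdAffBasis c) : Nonempty (L ≃ₗ⁅k⁆ M) := by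
  obtain ⟨hb1, hb2, hb3⟩ := hb
  obtain ⟨hc1, hc2, hc3⟩ := hc
  let e : L ≃ₗ[k] M := b.equiv c (Equiv.refl _)
  have he : ∀ i, e (b i) = c i := fun i => by simp [e]
  have key : ∀ i j, e ⁅b i, b j⁆ = ⁅c i, c j⁆ := by
    rintro (i | i) (j | j)
    · rw [hb1, hc1, map_zero]
    · rw [hb3, hc3]; split_ifs <;> simp [he]
    · rw [← lie_skew, ← lie_skew (c _), hb3, hc3, map_neg]; split_ifs <;> simp [he]
    · rw [hb2, hc2, map_zero]
  have h2 : (LieModule.toEnd k L L : L →ₗ[k] Module.End k L).compr₂ e.toLinearMap =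
      (LieModule.toEnd k M M : M →ₗ[k] Module.End k M).compl₁₂ e.toLinearMap e.toLinearMap := by
    refine b.ext fun i => b.ext fun j => ?_
    simpa [he] using key i j
  refine ⟨{ e with map_lie' := ?_ }⟩
  intro x y
  have := LinearMap.congr_fun (LinearMap.congr_fun h2 x) y
  simpa using this

/-- The nonzero weight vectors for (a submodule) `H`. -/
def nzWeightVec (k : Type*) {L : Type*} [Field k] [LieRing L] [LieAlgebra k L]
    (H : Submodule k L) : Set L :=
  {x | ∃ α : Module.Dual k H, α ≠ 0 ∧ ∀ h : H, ⁅(h : L), x⁆ = α h • x}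

theorem exists_std_of_frobenius {k L : Type*} [Field k] [LieRing L] [LieAlgebra k L]
    [FiniteDimensional k L] (H : Submodule k L)
    (hab : ∀ x ∈ H, ∀ y ∈ H, ⁅x, y⁆ = 0)
    (htop : H ⊔ Submodule.span k (nzWeightVec k H) = ⊤)
    (hF : IsFrobeniusLieAlgebra k L) (hS : IsTwoStepSolvable k L) :
    ∃ (n : ℕ) (b : Module.Basis (Fin n ⊕ Fin n) k L), IsStdAffBasis b := by
  obtain ⟨f, hf⟩ := hF
  -- weight vectors commute
  have hD : ∀ x ∈ nzWeightVec k H, x ∈ LieAlgebra.derivedSeries k L 1 := by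
    rintro x ⟨α, hα, hx⟩
    obtain ⟨h, hh⟩ : ∃ h, α h ≠ 0 := by
      by_contra! hcon
      exact hα (LinearMap.ext hcon)
    have : x = (α h)⁻¹ • ⁅(h : L), x⁆ := by rw [hx, smul_smul, inv_mul_cancel₀ hh, one_smul]
    rw [this]
    refine Submodule.smul_mem _ _ ?_
    exact LieSubmodule.lie_mem_lie (LieSubmodule.mem_top _) (LieSubmodule.mem_top _)
  have hTT : ∀ x ∈ nzWeightVec k H, ∀ y ∈ nzWeightVec k H, ⁅x, y⁆ = 0 := by
    intro x hx y hy
    have : ⁅x, y⁆ ∈ LieAlgebra.derivedSeries k L 2 :=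
      LieSubmodule.lie_mem_lie (hD x hx) (hD y hy)
    rw [hS.2] at this
    simpa using this
  -- nondegeneracy tested on generators
  have hnd : ∀ y, (∀ h ∈ H, f ⁅h, y⁆ = 0) → (∀ x ∈ nzWeightVec k H, f ⁅x, y⁆ = 0) → y = 0 := by
    intro y h1 h2
    refine hf y fun x => ?_
    let φ : L →ₗ[k] k :=
      f ∘ₗ (LieModule.toEnd k L L : L →ₗ[k] Module.End k L).flip y
    have hφ : ∀ x, φ x = f ⁅x, y⁆ := fun x => by simp [φ]
    have : (⊤ : Submodule k L) ≤ LinearMap.ker φ := by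
      rw [← htop, sup_le_iff, Submodule.span_le]
      exact ⟨fun h hh => by simpa [hφ] using h1 h hh, fun h hh => by simpa [hφ] using h2 h hh⟩
    rw [← hφ]
    exact this Submodule.mem_top
  obtain ⟨T, hTsub, hTspan, hTli⟩ := exists_linearIndependent k (nzWeightVec k H)
  have hTfin : Finite T := hTli.finite
  obtain ⟨n, ⟨e⟩⟩ := Finite.exists_equiv_fin T
  let x : Fin n → L := fun i => (e.symm i : L)
  have hxT : ∀ i, x i ∈ nzWeightVec k H := fun i => hTsub (e.symm i).2
  have hxli : LinearIndependent k x := hTli.comp e.symm e.symm.injective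
  have hxspan : Submodule.span k (Set.range x) = Submodule.span k (nzWeightVec k H) := by
    rw [← hTspan]
    congr 1
    ext y
    constructor
    · rintro ⟨i, rfl⟩; exact (e.symm i).2
    · intro hy; exact ⟨e ⟨y, hy⟩, by simp [x]⟩
  have hspanab : ∀ y ∈ Submodule.span k (nzWeightVec k H), ∀ z ∈ nzWeightVec k H,
      ⁅z, y⁆ = 0 := by
    intro y hy z hz
    induction hy using Submodule.span_induction with
    | mem y hy => exact hTT z hz y hy
    | zero => simp
    | add a b _ _ ha hb => simp [ha, hb]
    | smul c a _ ha => simp [ha]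
  choose α hα hαx using hxT
  have hfx : ∀ i, f (x i) ≠ 0 := by
    intro i hi
    refine hxli.ne_zero i (hnd _ (fun h hh => ?_) (fun z hz => ?_))
    · rw [hαx i ⟨h, hh⟩]; simp [hi]
    · rw [hTT z hz _ (hTsub (e.symm i).2), map_zero]
  have hαli : LinearIndependent k α := by
    rw [Fintype.linearIndependent_iff]
    intro c hc
    have hy : ∑ i, (c i * (f (x i))⁻¹) • x i = 0 := by
      refine hnd _ (fun h hh => ?_) (fun z hz => ?_)
      · have : ∀ i, ⁅h, x i⁆ = α i ⟨h, hh⟩ • x i := fun i => hαx i ⟨h, hh⟩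
        have h3 := LinearMap.congr_fun hc ⟨h, hh⟩
        simp only [LinearMap.sum_apply, LinearMap.smul_apply, smul_eq_mul,
          LinearMap.zero_apply] at h3
        rw [lie_sum, map_sum, ← h3]
        refine Finset.sum_congr rfl fun i _ => ?_
        rw [lie_smul, this]
        simp only [map_smul, smul_eq_mul]
        have := hfx i
        field_simp
      · rw [hspanab _ _ z hz, map_zero]
        refine Submodule.sum_mem _ fun i _ => Submodule.smul_mem _ _ ?_
        exact Submodule.subset_span (hTsub (e.symm i).2)
    intro i
    have := Fintype.linearIndependent_iff.1 hxli _ hy i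
    simpa [hfx i] using this
  let Φ : H →ₗ[k] (Fin n → k) := LinearMap.pi α
  have hΦ : Function.Injective Φ := by
    rw [← LinearMap.ker_eq_bot, LinearMap.ker_eq_bot']
    intro h hh
    have h0 : ∀ i, α i h = 0 := fun i => congrFun hh i
    have : (h : L) = 0 := by
      refine hnd _ (fun h' hh' => by rw [hab _ hh' _ h.2, map_zero]) (fun z hz => ?_)
      have hz' : z ∈ Submodule.span k (Set.range x) := by
        rw [hxspan]; exact Submodule.subset_span hz
      have : ⁅(h : L), z⁆ = 0 := by
        clear hz
        induction hz' using Submodule.span_induction with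
        | mem y hy => obtain ⟨i, rfl⟩ := hy; rw [hαx, h0, zero_smul]
        | zero => simp
        | add a b _ _ ha hb => simp [ha, hb]
        | smul c a _ ha => simp [ha]
      rw [← lie_skew, this]; simp
    exact Subtype.ext this
  have hdim : Module.finrank k H = Module.finrank k (Fin n → k) := by
    apply le_antisymm (LinearMap.finrank_le_finrank_of_injective hΦ)
    have := hαli.fintype_card_le_finrank
    rw [Subspace.dual_finrank_eq, Fintype.card_fin] at this
    rwa [Module.finrank_fin_fun]
  let Ψ : H ≃ₗ[k] (Fin n → k) := LinearEquiv.ofInjectiveOfFinrankEq Φ hΦ hdim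
  let bH : Module.Basis (Fin n) k H := Module.Basis.ofEquivFun Ψ
  have hbH : ∀ i j, α j (bH i) = if i = j then 1 else 0 := by
    intro i j
    have h1 : Ψ (bH i) = Pi.single i 1 := by simp [bH]
    have h2 : Ψ (bH i) j = α j (bH i) := rfl
    rw [← h2, h1, Pi.single_apply]
    simp [eq_comm]
  let y : Fin n → L := fun i => (bH i : L)
  have hyli : LinearIndependent k y := bH.linearIndependent.map' H.subtype H.ker_subtype
  have hyspan : Submodule.span k (Set.range y) = H := by
    have : Set.range y = H.subtype '' Set.range bH := by
      rw [← Set.range_comp]; rfl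
    rw [this, Submodule.span_image, bH.span_eq, Submodule.map_top, Submodule.range_subtype]
  have hdisj : Disjoint (Submodule.span k (Set.range y)) (Submodule.span k (Set.range x)) := by
    rw [hyspan, hxspan, Submodule.disjoint_def]
    intro z hz hz'
    exact hnd z (fun h hh => by rw [hab h hh z hz, map_zero])
      (fun w hw => by rw [hspanab z hz' w hw, map_zero])
  have hli := hyli.sum_type hxli hdisj
  have hsp : ⊤ ≤ Submodule.span k (Set.range (Sum.elim y x)) := by
    rw [Set.Sum.elim_range, Submodule.span_union, hyspan, hxspan, htop]
  refine ⟨n, Module.Basis.mk hli hsp, ?_, ?_, ?_⟩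
  · intro i j
    simpa using hab _ (bH i).2 _ (bH j).2
  · intro i j
    simpa using hTT _ (hTsub (e.symm i).2) _ (hTsub (e.symm j).2)
  · intro i j
    simp only [Module.Basis.mk_apply, Sum.elim_inl, Sum.elim_inr]
    rw [hαx j (bH i), hbH]
    split_ifs <;> simp

theorem exists_std_of_liePoset {k : Type*} [Field k] [IsAlgClosed k] [CharZero k] {g : Type*}
    [LieRing g] [LieAlgebra k g] [FiniteDimensional k g] [LieAlgebra.IsSemisimple k g]
    (H : LieSubalgebra k g) [H.IsCartanSubalgebra] (p : LieSubalgebra k g) (hp : H ≤ p)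
    (hF : IsFrobeniusLieAlgebra k ↥p) (hS : IsTwoStepSolvable k ↥p) :
    ∃ (n : ℕ) (b : Module.Basis (Fin n ⊕ Fin n) k p), IsStdAffBasis b := by
  let H' : Submodule k p := H.toSubmodule.comap p.toSubmodule.subtype
  have hH' : ∀ z : p, z ∈ H' ↔ (z : g) ∈ H := fun z => Iff.rfl
  refine exists_std_of_frobenius H' ?_ ?_ hF hS
  · intro x hx y hy
    have : ⁅(⟨x, hx⟩ : H), (⟨y, hy⟩ : H)⁆ = 0 := trivial_lie_zero _ _ _ _
    apply Subtype.ext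
    simpa using congrArg (Subtype.val) this
  · let N : LieSubmodule k H g :=
      { p.toSubmodule with lie_mem := fun {x m} hm => p.lie_mem (hp x.2) hm }
    have hN : N.toSubmodule ≤
        (H' ⊔ Submodule.span k (nzWeightVec k H')).map p.toSubmodule.subtype := by
      rw [LieModule.eq_iSup_inf_genWeightSpace k H g N, LieSubmodule.iSup_toSubmodule]
      refine iSup_le fun χ z hz => ?_
      obtain ⟨hzp, hzχ⟩ : z ∈ p ∧ z ∈ LieAlgebra.rootSpace H χ := hz
      refine ⟨⟨z, hzp⟩, ?_, rfl⟩
      by_cases h0 : χ.IsZero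
      · refine Submodule.mem_sup_left ?_
        rw [h0.eq, LieAlgebra.rootSpace_zero_eq] at hzχ
        exact hzχ
      · refine Submodule.mem_sup_right (Submodule.subset_span ?_)
        let ι : H' →ₗ[k] H := (p.toSubmodule.subtype ∘ₗ H'.subtype).codRestrict H.toSubmodule
          (fun c => c.2)
        refine ⟨LieModule.Weight.toLinear k H g χ ∘ₗ ι, ?_, ?_⟩
        · intro hcon
          apply h0
          funext h
          exact LinearMap.congr_fun hcon ⟨⟨h, hp h.2⟩, h.2⟩
        · intro h
          apply Subtype.ext
          exact LieAlgebra.IsKilling.lie_eq_smul_of_mem_rootSpace hzχ (ι h)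
    rw [eq_top_iff]
    rintro z -
    obtain ⟨w, hw, hwz⟩ := hN (show (z : g) ∈ N.toSubmodule from z.2)
    have : w = z := Subtype.ext hwz
    exact this ▸ hw

/-- **Classification theorem.**  Two Frobenius, two-step solvable Lie poset algebras (Lie
subalgebras between a Cartan subalgebra and a Borel subalgebra of a finite-dimensional
semisimple Lie algebra over an algebraically closed field of characteristic zero) are
isomorphic if and only if they have the same dimension. -/
theorem frobenius_twoStepSolvable_liePoset_iso_iff_finrank_eq
    {k : Type*} [Field k] [IsAlgClosed k] [CharZero k]
    {g₁ g₂ : Type*}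
    [LieRing g₁] [LieAlgebra k g₁] [FiniteDimensional k g₁] [LieAlgebra.IsSemisimple k g₁]
    [LieRing g₂] [LieAlgebra k g₂] [FiniteDimensional k g₂] [LieAlgebra.IsSemisimple k g₂]
    (b₁ : LieSubalgebra k g₁) (hb₁ : IsBorelSubalgebra k b₁)
    (H₁ : LieSubalgebra k g₁) [H₁.IsCartanSubalgebra] (hH₁ : H₁ ≤ b₁)
    (p₁ : LieSubalgebra k g₁) (hp₁l : H₁ ≤ p₁) (hp₁u : p₁ ≤ b₁)
    (b₂ : LieSubalgebra k g₂) (hb₂ : IsBorelSubalgebra k b₂)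
    (H₂ : LieSubalgebra k g₂) [H₂.IsCartanSubalgebra] (hH₂ : H₂ ≤ b₂)
    (p₂ : LieSubalgebra k g₂) (hp₂l : H₂ ≤ p₂) (hp₂u : p₂ ≤ b₂)
    (hF₁ : IsFrobeniusLieAlgebra k ↥p₁) (hS₁ : IsTwoStepSolvable k ↥p₁)
    (hF₂ : IsFrobeniusLieAlgebra k ↥p₂) (hS₂ : IsTwoStepSolvable k ↥p₂) :
    Nonempty (↥p₁ ≃ₗ⁅k⁆ ↥p₂) ↔ Module.finrank k ↥p₁ = Module.finrank k ↥p₂ := by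
  refine ⟨fun ⟨e⟩ => e.toLinearEquiv.finrank_eq, fun hdim => ?_⟩
  obtain ⟨n, b, hb⟩ := exists_std_of_liePoset H₁ p₁ hp₁l hF₁ hS₁
  obtain ⟨m, c, hc⟩ := exists_std_of_liePoset H₂ p₂ hp₂l hF₂ hS₂
  rw [Module.finrank_eq_card_basis b, Module.finrank_eq_card_basis c] at hdim
  simp only [Fintype.card_sum, Fintype.card_fin] at hdim
  obtain rfl : n = m := by omega
  exact nonempty_lieEquiv_of_std b c hb hc
end

section
/- Let k be an algebraically closed field of characteristic zero, let g be a finite-dimensional semisimple Lie algebra over k, let b be a Borel subalgebra of g (a maximal solvable Lie subalgebra), let h ⊆ b be a Cartan subalgebra of g, and let p be a Lie subalgebra with h ⊆ p ⊆ b. If p is Frobenius and two-step solvable, then dim p is even, say dim p = 2n, and p is isomorphic as a Lie algebra to Φ_n, the product of n copies of the two-dimensional non-abelian Lie algebra t₂. -/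
/-- `B` is a basis exhibiting a Lie algebra as `Φ_n = t₂ × ⋯ × t₂` (`n` copies of the
two-dimensional non-abelian Lie algebra): writing `d i = B (Sum.inl i)` and
`e i = B (Sum.inr i)`, the only nonzero brackets of basis vectors are
`⁅d i, e i⁆ = e i`. -/
def IsPhiBasis {k L : Type*} [CommRing k] [LieRing L] [LieAlgebra k L] {n : ℕ}
    (B : Module.Basis (Fin n ⊕ Fin n) k L) : Prop :=
  (∀ i j : Fin n, ⁅B (Sum.inl i), B (Sum.inl j)⁆ = 0) ∧
  (∀ i j : Fin n, ⁅B (Sum.inr i), B (Sum.inr j)⁆ = 0) ∧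
  (∀ i j : Fin n, ⁅B (Sum.inl i), B (Sum.inr j)⁆ = if i = j then B (Sum.inr i) else 0)

/-- The linear-algebra core: an algebra spanned by a commuting family `ι V` and by commuting
weight vectors `e s` is `Φ_n` as soon as it is Frobenius. -/
theorem phi_of_weight_data {k L V : Type*} [Field k] [LieRing L] [LieAlgebra k L]
    [AddCommGroup V] [Module k V] (n : ℕ) (ι : V →ₗ[k] L) (e : Fin n → L)
    (α : Fin n → Module.Dual k V)
    (hι : Function.Injective ι) (he : LinearIndependent k e)
    (hVV : ∀ v w, ⁅ι v, ι w⁆ = 0)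
    (hVe : ∀ v s, ⁅ι v, e s⁆ = α s v • e s)
    (hee : ∀ s t, ⁅e s, e t⁆ = 0)
    (hspan : LinearMap.range ι ⊔ Submodule.span k (Set.range e) = ⊤)
    (hF : IsFrobeniusLieAlgebra k L) :
    ∃ n : ℕ, Module.finrank k L = 2 * n ∧
      ∃ B : Module.Basis (Fin n ⊕ Fin n) k L, IsPhiBasis B := by
  obtain ⟨f, hf⟩ := hF
  have heV : ∀ s v, ⁅e s, ι v⁆ = -(α s v • e s) := fun s v ↦ by rw [← lie_skew, hVe]
  -- a criterion for lying in the radical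
  have hrad : ∀ y : L, (∀ v, f ⁅ι v, y⁆ = 0) → (∀ s, f ⁅e s, y⁆ = 0) → y = 0 := by
    intro y h1 h2
    apply hf
    intro x
    let φ : L →ₗ[k] k :=
      { toFun := fun x ↦ f ⁅x, y⁆
        map_add' := fun a b ↦ by simp
        map_smul' := fun c a ↦ by simp }
    have hφ : ∀ x, φ x = f ⁅x, y⁆ := fun x ↦ rfl
    have : (⊤ : Submodule k L) ≤ LinearMap.ker φ := by
      rw [← hspan]
      refine sup_le ?_ ?_
      · rintro _ ⟨v, rfl⟩
        simp [hφ, h1]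
      · rw [Submodule.span_le]
        rintro _ ⟨s, rfl⟩
        simp [hφ, h2]
    exact this (Submodule.mem_top (x := x))
  have hfe : ∀ s, f (e s) ≠ 0 := by
    intro s hs
    refine he.ne_zero s (hrad _ ?_ ?_)
    · intro v; simp [hVe, hs]
    · intro t; simp [hee]
  have hinj : Function.Injective (LinearMap.pi α) := by
    rw [injective_iff_map_eq_zero]
    intro v hv
    have hv' : ∀ s, α s v = 0 := fun s ↦ congrFun hv s
    apply hι
    rw [map_zero]
    apply hrad
    · intro w; simp [hVV]
    · intro s; simp [heV, hv']
  have hli : LinearIndependent k α := by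
    rw [Fintype.linearIndependent_iff]
    intro c hc
    have hy : ∑ s, (c s / f (e s)) • e s = 0 := by
      apply hrad
      · intro v
        have := LinearMap.congr_fun hc v
        simp only [LinearMap.sum_apply, LinearMap.smul_apply, smul_eq_mul,
          LinearMap.zero_apply] at this
        rw [lie_sum, map_sum, ← this]
        refine Finset.sum_congr rfl fun s _ ↦ ?_
        rw [lie_smul, hVe, map_smul, map_smul, smul_eq_mul, smul_eq_mul]
        have := hfe s
        field_simp
      · intro t; simp [lie_sum, hee]
    intro s
    have := Fintype.linearIndependent_iff.mp he _ hy s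
    simpa [hfe s] using this
  have : FiniteDimensional k V := FiniteDimensional.of_injective _ hinj
  have h1 : Module.finrank k V ≤ n := by
    simpa using LinearMap.finrank_le_finrank_of_injective hinj
  have h2 : n ≤ Module.finrank k V := by
    simpa [Subspace.dual_finrank_eq] using hli.fintype_card_le_finrank
  have hsurj : Function.Surjective (LinearMap.pi α) :=
    (LinearMap.injective_iff_surjective_of_finrank_eq_finrank (by simp; omega)).mp hinj
  choose d hd using fun i : Fin n ↦ hsurj (Pi.single i 1)
  have hαd : ∀ i j, α j (d i) = if i = j then 1 else 0 := by
    intro i j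
    have := congrFun (hd i) j
    simp only [LinearMap.pi_apply, Pi.single_apply] at this
    rw [this]
    simp [eq_comm]
  let v : Fin n ⊕ Fin n → L := Sum.elim (fun i ↦ ι (d i)) e
  have hv : LinearIndependent k v := by
    rw [Fintype.linearIndependent_iff]
    intro c hc
    simp only [v, Fintype.sum_sum_type, Sum.elim_inl, Sum.elim_inr] at hc
    rintro (j | j)
    · have := congrArg (fun x ↦ ⁅e j, x⁆) hc
      simpa [lie_sum, heV, hee, hαd, he.ne_zero j] using this
    · have := congrArg (fun x ↦ ⁅ι (d j), x⁆) hc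
      simpa [lie_sum, hVV, hVe, hαd, he.ne_zero j] using this
  have hs : ⊤ ≤ Submodule.span k (Set.range v) := by
    rw [← hspan]
    refine sup_le ?_ ?_
    · rintro _ ⟨w, rfl⟩
      have : w = ∑ i, α i w • d i := by
        apply hinj
        ext j
        simp [hαd]
      rw [this, map_sum]
      refine Submodule.sum_mem _ fun i _ ↦ ?_
      rw [map_smul]
      exact Submodule.smul_mem _ _ (Submodule.subset_span ⟨Sum.inl i, rfl⟩)
    · apply Submodule.span_mono
      rintro _ ⟨i, rfl⟩
      exact ⟨Sum.inr i, rfl⟩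
  let B := Module.Basis.mk hv hs
  refine ⟨n, ?_, B, ?_, ?_, ?_⟩
  · rw [Module.finrank_eq_card_basis B]; simp; omega
  · intro i j; simp [B, v, hVV]
  · intro i j; simp [B, v, hee]
  · intro i j
    simp only [B, Module.Basis.mk_apply, v, Sum.elim_inl, Sum.elim_inr, hVe, hαd]
    split_ifs with h
    · simp [h]
    · simp

open LieModule LieAlgebra in
/-- A Frobenius, two-step solvable Lie poset algebra `p` has even dimension `2n`, and is
isomorphic to `Φ_n`, the product of `n` copies of the two-dimensional non-abelian Lie
algebra `t₂`; equivalently, `p` has a basis `{d_1, e_1, …, d_n, e_n}` with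
`⁅d_i, e_j⁆ = δ_{ij} e_i` and all other brackets of basis vectors zero. -/
theorem frobenius_twoStepSolvable_liePoset_iso_phi
    {k : Type*} [Field k] [IsAlgClosed k] [CharZero k]
    {g : Type*} [LieRing g] [LieAlgebra k g] [FiniteDimensional k g]
    [LieAlgebra.IsSemisimple k g]
    (b : LieSubalgebra k g) (hb : IsBorelSubalgebra k b)
    (H : LieSubalgebra k g) [H.IsCartanSubalgebra] (hH : H ≤ b)
    (p : LieSubalgebra k g) (hpl : H ≤ p) (hpu : p ≤ b)
    (hF : IsFrobeniusLieAlgebra k ↥p) (hS : IsTwoStepSolvable k ↥p) :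
    ∃ n : ℕ, Module.finrank k ↥p = 2 * n ∧
      ∃ B : Module.Basis (Fin n ⊕ Fin n) k ↥p, IsPhiBasis B := by
  classical
  let P : LieSubmodule k H g :=
    { p.toSubmodule with
      lie_mem := fun {x m} hm ↦ p.lie_mem (hpl x.2) hm }
  have hPp : ∀ x, x ∈ P ↔ x ∈ p := fun x ↦ Iff.rfl
  let S := {α : Weight k H g // α.IsNonZero ∧ rootSpace H α ≤ P}
  have : Fintype S := Fintype.ofFinite S
  have hex : ∀ s : S, ∃ x : g, x ≠ 0 ∧ x ∈ rootSpace H s.1 ∧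
      ∀ y ∈ rootSpace H s.1, ∃ c : k, c • x = y := by
    intro s
    obtain ⟨x, hx0, hx⟩ := finrank_eq_one_iff'.mp
      (LieAlgebra.IsKilling.finrank_rootSpace_eq_one s.1 s.2.1)
    refine ⟨x, by simpa using hx0, x.2, fun y hy ↦ ?_⟩
    obtain ⟨c, hc⟩ := hx ⟨y, hy⟩
    exact ⟨c, congrArg Subtype.val hc⟩
  choose x hx0 hxm hx1 using hex
  let e : S → p := fun s ↦ ⟨x s, s.2.2 (hxm s)⟩
  let ι : H →ₗ[k] p := Submodule.inclusion hpl
  have hιv : ∀ h, (ι h : g) = h := fun h ↦ rfl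
  have hVe : ∀ (h : H) s, ⁅ι h, e s⁆ = (Weight.toLinear k H g s.1 h) • e s := by
    intro h s
    apply Subtype.ext
    exact LieAlgebra.IsKilling.lie_eq_smul_of_mem_rootSpace (hxm s) h
  have hVV : ∀ h h' : H, ⁅ι h, ι h'⁆ = 0 := by
    intro h h'
    apply Subtype.ext
    have := trivial_lie_zero H H h h'
    exact congrArg (Subtype.val : H → g) this
  have hxD : ∀ s, e s ∈ derivedSeries k p 1 := by
    intro s
    obtain ⟨h, hh⟩ : ∃ h, Weight.toLinear k H g s.1 h ≠ 0 := by
      by_contra! hcon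
      exact s.2.1 (funext hcon)
    have : e s = (Weight.toLinear k H g s.1 h)⁻¹ • ⁅ι h, e s⁆ := by
      rw [hVe, smul_smul, inv_mul_cancel₀ hh, one_smul]
    rw [this]
    refine Submodule.smul_mem _ _ ?_
    exact LieSubmodule.lie_mem_lie (LieSubmodule.mem_top _) (LieSubmodule.mem_top _)
  have hee : ∀ s t, ⁅e s, e t⁆ = 0 := by
    intro s t
    have h : ⁅e s, e t⁆ ∈ derivedSeries k p 2 :=
      LieSubmodule.lie_mem_lie (hxD s) (hxD t)
    rw [hS.2] at h
    simpa using h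
  have hxli : LinearIndependent k x := by
    have h1 := LieModule.iSupIndep_genWeightSpace' k H g
    rw [← LieSubmodule.iSupIndep_toSubmodule] at h1
    have h2 := h1.comp (f := fun s : S ↦ s.1) Subtype.val_injective
    exact h2.linearIndependent _ (fun s ↦ hxm s) hx0
  have heli : LinearIndependent k e :=
    LinearIndependent.of_comp p.toSubmodule.subtype hxli
  have hspan : LinearMap.range ι ⊔ Submodule.span k (Set.range e) = ⊤ := by
    have key : P.toSubmodule ≤ (LinearMap.range ι ⊔ Submodule.span k (Set.range e)).map
        p.toSubmodule.subtype := by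
      conv_lhs => rw [LieModule.eq_iSup_inf_genWeightSpace k H g P]
      rw [LieSubmodule.iSup_toSubmodule]
      refine iSup_le fun χ ↦ ?_
      rintro y ⟨hyP, hy⟩
      by_cases hχ : χ.IsZero
      · have hyH : y ∈ H := by
          have : y ∈ rootSpace H (0 : H → k) := by
            rw [← hχ.eq]; exact hy
          rw [rootSpace_zero_eq] at this
          simpa using this
        exact ⟨ι ⟨y, hyH⟩, Submodule.mem_sup_left ⟨_, rfl⟩, rfl⟩
      · by_cases hy0 : y = 0
        · subst hy0; exact Submodule.zero_mem _
        · have hle : rootSpace H χ ≤ P := by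
            intro z hz
            obtain ⟨c, hc⟩ := (finrank_eq_one_iff_of_nonzero' (⟨y, hy⟩ : rootSpace H χ)
              (by simpa using hy0)).mp
              (LieAlgebra.IsKilling.finrank_rootSpace_eq_one χ hχ) ⟨z, hz⟩
            have : c • y = z := congrArg Subtype.val hc
            rw [← this]
            exact P.smul_mem c hyP
          obtain ⟨c, hc⟩ := hx1 ⟨χ, hχ, hle⟩ y hy
          refine ⟨c • e ⟨χ, hχ, hle⟩, Submodule.mem_sup_right
            (Submodule.smul_mem _ _ (Submodule.subset_span ⟨_, rfl⟩)), hc⟩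
    rw [eq_top_iff]
    rintro ⟨y, hy⟩ -
    obtain ⟨z, hz, hzy⟩ := key (show y ∈ P from hy)
    have : z = ⟨y, hy⟩ := Subtype.ext hzy
    exact this ▸ hz
  let σ := (Fintype.equivFin S).symm
  refine phi_of_weight_data (Fintype.card S) ι (e ∘ σ) (fun i ↦ Weight.toLinear k H g (σ i).1)
    (Submodule.inclusion_injective hpl) (heli.comp _ σ.injective) hVV (fun v s ↦ hVe v _)
    (fun s t ↦ hee _ _) ?_ hF
  rwa [σ.surjective.range_comp]
end

section
/- Let k be an algebraically closed field of characteristic zero and let Φ_n be the product of n copies of the two-dimensional non-abelian Lie algebra t₂. Then every Chevalley–Eilenberg 2-cocycle of Φ_n with coefficients in the adjoint representation is a 2-coboundary; that is, for every alternating bilinear map F : Φ_n × Φ_n → Φ_n satisfying ⁅x, F(y,z)⁆ − ⁅y, F(x,z)⁆ + ⁅z, F(x,y)⁆ − F(⁅x,y⁆, z) + F(⁅x,z⁆, y) − F(⁅y,z⁆, x) = 0 for all x, y, z ∈ Φ_n, there exists a linear map G : Φ_n → Φ_n with F(x,y) = ⁅x, G(y)⁆ − ⁅y, G(x)⁆ −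 G(⁅x,y⁆) for all x, y ∈ Φ_n. In other words, H²(Φ_n, Φ_n) = 0. -/
theorem phi_bracket_d {k L : Type*} [CommRing k] [LieRing L] [LieAlgebra k L] {n : ℕ}
    (B : Module.Basis (Fin n ⊕ Fin n) k L) (hB : IsPhiBasis B) (i : Fin n) (v : L) :
    ⁅B (Sum.inl i), v⁆ = (B.repr v (Sum.inr i)) • B (Sum.inr i) := by
  obtain ⟨h1, h2, h3⟩ := hB
  have : (LieAlgebra.ad k L (B (Sum.inl i)) : L →ₗ[k] L)
      = (B.coord (Sum.inr i)).smulRight (B (Sum.inr i)) := by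
    refine B.ext fun a => ?_
    rcases a with a | a
    · simp [h1]
    · by_cases h : i = a
      · subst h; simp [h3]
      · simp [h3, h, Finsupp.single_apply, Ne.symm h]
  simpa using LinearMap.congr_fun this v

theorem phi_bracket_e {k L : Type*} [CommRing k] [LieRing L] [LieAlgebra k L] {n : ℕ}
    (B : Module.Basis (Fin n ⊕ Fin n) k L) (hB : IsPhiBasis B) (i : Fin n) (v : L) :
    ⁅B (Sum.inr i), v⁆ = (-(B.repr v (Sum.inl i))) • B (Sum.inr i) := by
  obtain ⟨h1, h2, h3⟩ := hB
  have : (LieAlgebra.ad k L (B (Sum.inr i)) : L →ₗ[k] L)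
      = (-(B.coord (Sum.inl i))).smulRight (B (Sum.inr i)) := by
    refine B.ext fun a => ?_
    rcases a with a | a
    · rw [LieAlgebra.ad_apply, ← lie_skew, h3]
      by_cases h : a = i
      · subst h; simp
      · simp [h, Finsupp.single_apply]
    · simp [h2]
  simpa using LinearMap.congr_fun this v

/-- **Rigidity theorem for `Φ_n`.**  `H²(Φ_n, Φ_n) = 0`: every Chevalley–Eilenberg 2-cocycle
of `Φ_n` (the product of `n` copies of the two-dimensional non-abelian Lie algebra `t₂`) with
coefficients in the adjoint representation is a 2-coboundary. -/
theorem phi_second_cohomology_trivial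
    {k : Type*} [Field k] [IsAlgClosed k] [CharZero k]
    {L : Type*} [LieRing L] [LieAlgebra k L]
    {n : ℕ} (B : Module.Basis (Fin n ⊕ Fin n) k L) (hB : IsPhiBasis B)
    (F : L →ₗ[k] L →ₗ[k] L) (halt : ∀ x : L, F x x = 0)
    (hcocycle : ∀ x y z : L,
      ⁅x, F y z⁆ - ⁅y, F x z⁆ + ⁅z, F x y⁆ - F ⁅x, y⁆ z + F ⁅x, z⁆ y - F ⁅y, z⁆ x = 0) :
    ∃ G : L →ₗ[k] L, ∀ x y : L, F x y = ⁅x, G y⁆ - ⁅y, G x⁆ - G ⁅x, y⁆ := by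
  have hd := phi_bracket_d B hB
  have he := phi_bracket_e B hB
  obtain ⟨h1, h2, h3⟩ := hB
  have h4 : ∀ i j : Fin n, ⁅B (Sum.inr i), B (Sum.inl j)⁆ = if i = j then -B (Sum.inr i) else 0 := by
    intro i j
    rw [← lie_skew, h3]
    by_cases h : i = j
    · simp [h]
    · simp [h, Ne.symm h]
  have hskew : ∀ x y : L, F x y = - F y x := by
    intro x y
    have := halt (x + y)
    simp only [map_add, LinearMap.add_apply, halt, zero_add, add_zero] at this
    exact eq_neg_of_add_eq_zero_right this
  have rd : ∀ i v a, B.repr ⁅B (Sum.inl i), v⁆ a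
      = if a = Sum.inr i then B.repr v (Sum.inr i) else 0 := by
    intro i v a
    rw [hd]
    simp [Finsupp.single_apply, eq_comm]
  have re : ∀ i v a, B.repr ⁅B (Sum.inr i), v⁆ a
      = if a = Sum.inr i then -B.repr v (Sum.inl i) else 0 := by
    intro i v a
    rw [he]
    by_cases h : a = Sum.inr i
    · simp [h]
    · simp [h, Finsupp.single_apply, Ne.symm h]
  have hc : ∀ x y z a, B.repr ⁅x, F y z⁆ a - B.repr ⁅y, F x z⁆ a + B.repr ⁅z, F x y⁆ a
      - B.repr (F ⁅x, y⁆ z) a + B.repr (F ⁅x, z⁆ y) a - B.repr (F ⁅y, z⁆ x) a = 0 := by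
    intro x y z a
    have := congrArg (fun v => B.repr v a) (hcocycle x y z)
    simpa using this
  have hsk : ∀ x y a, B.repr (F x y) a = - B.repr (F y x) a := by
    intro x y a
    rw [hskew x y]; simp
  -- coordinates of the cocycle
  have ddd : ∀ i j l m, l ≠ i → l ≠ j → m = Sum.inr l →
      B.repr (F (B (Sum.inl i)) (B (Sum.inl j))) m = 0 := by
    intro i j l m hi hj hm
    have := hc (B (Sum.inl i)) (B (Sum.inl j)) (B (Sum.inl l)) (Sum.inr l)
    subst hm
    simpa [rd, h1, hi, hj] using this
  have dde := fun i j l a => hc (B (Sum.inl i)) (B (Sum.inl j)) (B (Sum.inr l)) a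
  have dee := fun i j l a => hc (B (Sum.inl i)) (B (Sum.inr j)) (B (Sum.inr l)) a
  simp only [rd, re, h1, h2, h3, map_zero, LinearMap.zero_apply, Finsupp.zero_apply] at dde dee
  have ADD : ∀ i j l, B.repr (F (B (Sum.inl i)) (B (Sum.inl j))) (Sum.inl l) = 0 := by
    intro i j l
    by_cases hij : i = j
    · subst hij; simp [halt]
    have h := dde i j l (Sum.inr l)
    by_cases hli : i = l
    · subst hli
      simp [hij, Ne.symm hij] at h
      rw [hsk (B (Sum.inr i))] at h
      simpa using h
    · by_cases hlj : j = l
      · subst hlj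
        simp [hij, Ne.symm hij] at h
        rw [hsk (B (Sum.inr j))] at h
        simpa using h
      · simpa [hli, hlj, Ne.symm hli, Ne.symm hlj] using h
  have DED : ∀ i j l, i ≠ j → B.repr (F (B (Sum.inl i)) (B (Sum.inr j))) (Sum.inl l) = 0 := by
    intro i j l hij
    have h := dde j i j (Sum.inl l)
    rw [hsk]
    simpa [hij, Ne.symm hij] using h
  have DEE : ∀ i j l, i ≠ j → l ≠ j → B.repr (F (B (Sum.inl i)) (B (Sum.inr j))) (Sum.inr l)
      = if l = i then -B.repr (F (B (Sum.inl j)) (B (Sum.inr j))) (Sum.inr i) else 0 := by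
    intro i j l hij hlj
    have h := dde i j j (Sum.inr l)
    by_cases hli : l = i
    · subst hli
      simp [hij] at h
      rw [hsk (B (Sum.inr j))] at h
      simp
      linear_combination h
    · simp [hij, hli, hlj] at h
      rw [hsk]
      simp [hli, h]
  have EED : ∀ i j l, i ≠ j → B.repr (F (B (Sum.inr i)) (B (Sum.inr j))) (Sum.inl l) = 0 := by
    intro i j l hij
    have h := dee i i j (Sum.inl l)
    simpa [hij, Ne.symm hij] using h
  have EEE : ∀ i j l, i ≠ j → l ≠ i → B.repr (F (B (Sum.inr i)) (B (Sum.inr j))) (Sum.inr l)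
      = if l = j then -B.repr (F (B (Sum.inl i)) (B (Sum.inr i))) (Sum.inl j) else 0 := by
    intro i j l hij hli
    have h := dee i i j (Sum.inr l)
    by_cases hlj : l = j
    · subst hlj
      simp [hij, Ne.symm hij] at h
      simp
      linear_combination -h
    · simp [hij, hli, hlj] at h
      simp [hlj, h]
  let f : Fin n ⊕ Fin n → Fin n ⊕ Fin n → Fin n ⊕ Fin n → k :=
    fun a b c => B.repr (F (B a) (B b)) c
  let g : Fin n ⊕ Fin n → Fin n ⊕ Fin n → k := fun a b =>
    match a, b with
    | Sum.inl i, Sum.inl l => f (Sum.inl i) (Sum.inr l) (Sum.inr l)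
    | Sum.inl i, Sum.inr l => if i = l then 0 else -f (Sum.inl i) (Sum.inl l) (Sum.inr l)
    | Sum.inr j, Sum.inl l => -f (Sum.inl j) (Sum.inr j) (Sum.inl l)
    | Sum.inr j, Sum.inr l => if j = l then 0 else -f (Sum.inl j) (Sum.inr j) (Sum.inr l)
  let G : L →ₗ[k] L := B.constr k (fun a => B.equivFun.symm (g a))
  have hG : ∀ a b, B.repr (G (B a)) b = g a b := by
    intro a b
    simp only [G, Module.Basis.constr_basis]
    rw [← Module.Basis.equivFun_apply, LinearEquiv.apply_symm_apply]
  have DE : ∀ i j c, B.repr (F (B (Sum.inl i)) (B (Sum.inr j))) c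
      = B.repr ⁅B (Sum.inl i), G (B (Sum.inr j))⁆ c - B.repr ⁅B (Sum.inr j), G (B (Sum.inl i))⁆ c
        - B.repr (G ⁅B (Sum.inl i), B (Sum.inr j)⁆) c := by
    intro i j c
    rw [rd, re, h3, hG, hG]
    by_cases hij : i = j
    · subst hij
      simp only [if_true, hG]
      rcases c with l | l
      · simp [g, f]
      · by_cases hli : l = i
        · subst hli; simp [g, f]
        · simp [g, f, hli, Ne.symm hli]
    · simp only [if_neg hij, map_zero, Finsupp.zero_apply]
      rcases c with l | l
      · simp [DED i j l hij]
      · by_cases hlj : l = j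
        · subst hlj; simp [g, f, Ne.symm hij]
        · rw [DEE i j l hij hlj]
          by_cases hli : l = i
          · subst hli; simp [g, f, hij, Ne.symm hij]
          · simp [hli, hlj]
  have key : ∀ a b, F (B a) (B b) = ⁅B a, G (B b)⁆ - ⁅B b, G (B a)⁆ - G ⁅B a, B b⁆ := by
    intro a b
    apply B.repr.injective
    ext c
    rw [map_sub, map_sub, Finsupp.sub_apply, Finsupp.sub_apply]
    rcases a with i | i <;> rcases b with j | j
    · rw [rd, rd, h1, map_zero, map_zero, Finsupp.zero_apply, hG, hG]
      by_cases hij : i = j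
      · subst hij; simp [halt]
      rcases c with l | l
      · simp [ADD]
      · by_cases hli : l = i
        · subst hli
          simp [g, f, hij, Ne.symm hij]
          rw [hsk]
        · by_cases hlj : l = j
          · subst hlj
            simp [g, f, hij, Ne.symm hij]
          · simp [hli, hlj, ddd i j l _ hli hlj rfl]
    · exact DE i j c
    · rw [hsk, DE j i c, ← lie_skew (B (Sum.inr i)) (B (Sum.inl j)), map_neg, map_neg,
        Finsupp.neg_apply]
      ring
    · rw [re, re, h2, map_zero, map_zero, Finsupp.zero_apply, hG, hG]
      by_cases hij : i = j
      · subst hij; simp [halt]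
      rcases c with l | l
      · simp [EED i j l hij]
      · by_cases hli : l = i
        · subst hli
          rw [hsk]
          simp [g, f, hij, EEE j l l (Ne.symm hij) hij]
        · by_cases hlj : l = j
          · subst hlj
            simp [g, f, Ne.symm hij, EEE i l l hij hli]
          · simp [hli, hlj, EEE i j l hij hli]
  refine ⟨G, fun x y => ?_⟩
  let adL : L →ₗ[k] L →ₗ[k] L := (LieModule.toEnd k L L : L →ₗ[k] L →ₗ[k] L)
  have hE : F = adL.compl₂ G - (adL.compl₂ G).flip - adL.compr₂ G := by
    refine LinearMap.ext_basis B B fun a b => ?_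
    rw [key]
    simp [adL]
  have := LinearMap.congr_fun (LinearMap.congr_fun hE x) y
  simpa [adL] using this
end

section
/- Let k be an algebraically closed field of characteristic zero, let g be a finite-dimensional semisimple Lie algebra over k, let b be a Borel subalgebra of g (a maximal solvable Lie subalgebra), let h ⊆ b be a Cartan subalgebra of g, and let p be a Lie subalgebra with h ⊆ p ⊆ b which is Frobenius and two-step solvable. Then p is absolutely rigid: every alternating bilinear map F : p × p → p satisfying the 2-cocycle identity ⁅x, F(y,z)⁆ − ⁅y, F(x,z)⁆ + ⁅z, F(x,y)⁆ − F(⁅x,y⁆, z) + F(⁅x,z⁆, y) − F(⁅y,z⁆, x) = 0 for all x, y, z ∈ p is a coboundary, i.e., there exists a linear map G : p → p with F(x,y) = ⁅x, G(y)⁆ − ⁅y, G(x)⁆ − G(⁅x,y⁆) for all x, y ∈ p. In other words, H²(p, p) = 0. -/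
theorem lemB {k L ι : Type*} [Field k] [LieRing L] [LieAlgebra k L] [Fintype ι] [DecidableEq ι]
    (B : Module.Basis (ι ⊕ ι) k L)
    (hhh : ∀ i j, ⁅B (.inl i), B (.inl j)⁆ = 0)
    (hhe : ∀ i j, ⁅B (.inl i), B (.inr j)⁆ = if i = j then B (.inr j) else 0)
    (hee : ∀ i j, ⁅B (.inr i), B (.inr j)⁆ = 0)
    (F : L →ₗ[k] L →ₗ[k] L) (halt : ∀ x : L, F x x = 0)
    (hcocycle : ∀ x y z : L,
      ⁅x, F y z⁆ - ⁅y, F x z⁆ + ⁅z, F x y⁆ - F ⁅x, y⁆ z + F ⁅x, z⁆ y - F ⁅y, z⁆ x = 0) :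
    ∃ G : L →ₗ[k] L, ∀ x y : L, F x y = ⁅x, G y⁆ - ⁅y, G x⁆ - G ⁅x, y⁆ := by
  have hskew : ∀ x y, F x y = - F y x := by
    intro x y
    have h := halt (x + y)
    simp only [map_add, LinearMap.add_apply, halt, zero_add, add_zero] at h
    first | exact eq_neg_of_add_eq_zero_left h | exact eq_neg_of_add_eq_zero_left (by rw [add_comm]; exact h)
  have heh : ∀ j i, ⁅B (.inr j), B (.inl i)⁆ = if i = j then -B (.inr j) else 0 := by
    intro j i
    rw [← lie_skew, hhe]; split_ifs <;> simp
  let u : ι → L →ₗ[k] k := fun a => B.coord (.inl a)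
  let v : ι → L →ₗ[k] k := fun a => B.coord (.inr a)
  have uh : ∀ a i, u a (B (.inl i)) = if i = a then 1 else 0 := by
    intro a i; simp [u, Finsupp.single_apply]
  have ue : ∀ a i, u a (B (.inr i)) = 0 := by
    intro a i; simp [u, Finsupp.single_apply]
  have vh : ∀ a i, v a (B (.inl i)) = 0 := by
    intro a i; simp [v, Finsupp.single_apply]
  have ve : ∀ a i, v a (B (.inr i)) = if i = a then 1 else 0 := by
    intro a i; simp [v, Finsupp.single_apply]
  have hu : ∀ (a : ι) (x y : L), u a ⁅x, y⁆ = 0 := by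
    intro a
    have : (LieModule.toEnd k L L : L →ₗ[k] Module.End k L).compr₂ (u a) = 0 := by
      refine B.ext fun i => B.ext fun j => ?_
      rcases i with i | i <;> rcases j with j | j <;>
        simp only [LinearMap.compr₂_apply, LieHom.coe_toLinearMap, LieModule.toEnd_apply_apply,
          hhh, hhe, hee, heh, LinearMap.zero_apply, map_zero]
      · split_ifs <;> simp [ue]
      · split_ifs <;> simp [ue]
    intro x y
    exact LinearMap.congr_fun₂ this x y
  have hv : ∀ (a : ι) (x y : L), v a ⁅x, y⁆ = u a x * v a y - v a x * u a y := by
    intro a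
    have : (LieModule.toEnd k L L : L →ₗ[k] Module.End k L).compr₂ (v a) =
        (LinearMap.mul k k).compl₁₂ (u a) (v a) - (LinearMap.mul k k).compl₁₂ (v a) (u a) := by
      refine B.ext fun i => B.ext fun j => ?_
      rcases i with i | i <;> rcases j with j | j <;>
        simp only [LinearMap.compr₂_apply, LieHom.coe_toLinearMap, LieModule.toEnd_apply_apply,
          hhh, hhe, hee, heh, LinearMap.sub_apply, LinearMap.compl₁₂_apply, LinearMap.mul_apply',
          uh, ue, vh, ve, map_zero]
      · simp
      · by_cases hij : i = j
        · subst hij; simp [ve]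
        · simp only [if_neg hij, map_zero]
          by_cases hia : i = a
          · subst hia; simp [Ne.symm hij]
          · simp [hia]
      · by_cases hij : j = i
        · subst hij; simp [ve]
        · simp only [if_neg hij, map_zero]
          by_cases hia : i = a
          · subst hia; simp [hij]
          · simp [hia]
      · simp
    intro x y
    exact LinearMap.congr_fun₂ this x y
  have cu : ∀ (a : ι) (x y z : L), - u a (F ⁅x, y⁆ z) + u a (F ⁅x, z⁆ y) - u a (F ⁅y, z⁆ x) = 0 := by
    intro a x y z
    have := congrArg (u a) (hcocycle x y z)
    simpa only [map_sub, map_add, map_zero, hu, sub_zero, add_zero, zero_sub] using this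
  have cv : ∀ (a : ι) (x y z : L), (u a x * v a (F y z) - v a x * u a (F y z))
      - (u a y * v a (F x z) - v a y * u a (F x z)) + (u a z * v a (F x y) - v a z * u a (F x y))
      - v a (F ⁅x, y⁆ z) + v a (F ⁅x, z⁆ y) - v a (F ⁅y, z⁆ x) = 0 := by
    intro a x y z
    have := congrArg (v a) (hcocycle x y z)
    simpa only [map_sub, map_add, map_zero, hv] using this
  let G : L →ₗ[k] L := B.constr k (Sum.elim
    (fun i => B.equivFun.symm (Sum.elim (fun a => v a (F (B (.inl i)) (B (.inr a))))
      (fun a => v a (F (B (.inl a)) (B (.inl i))))))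
    (fun b => B.equivFun.symm (Sum.elim (fun a => - u a (F (B (.inl b)) (B (.inr b))))
      (fun a => if a = b then 0 else v a (F (B (.inl a)) (B (.inr b)))))))
  have coordsymm : ∀ (w : ι ⊕ ι → k) s, B.coord s (B.equivFun.symm w) = w s := by
    intro w s
    have := congrFun (B.equivFun.apply_symm_apply w) s
    simpa using this
  have uGh : ∀ a i, u a (G (B (.inl i))) = v a (F (B (.inl i)) (B (.inr a))) := by
    intro a i
    simp only [u, G, Module.Basis.constr_basis, Sum.elim_inl, coordsymm]
  have vGh : ∀ a i, v a (G (B (.inl i))) = v a (F (B (.inl a)) (B (.inl i))) := by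
    intro a i
    simp only [v, G, Module.Basis.constr_basis, Sum.elim_inl, Sum.elim_inr, coordsymm]
  have uGe : ∀ a i, u a (G (B (.inr i))) = - u a (F (B (.inl i)) (B (.inr i))) := by
    intro a i
    simp only [u, G, Module.Basis.constr_basis, Sum.elim_inl, Sum.elim_inr, coordsymm]
  have vGe : ∀ a i, v a (G (B (.inr i))) =
      if a = i then 0 else v a (F (B (.inl a)) (B (.inr i))) := by
    intro a i
    simp only [v, G, Module.Basis.constr_basis, Sum.elim_inr, coordsymm]
  have hext : ∀ x y : L, (∀ a, u a x = u a y) → (∀ a, v a x = v a y) → x = y := by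
    intro x y h1 h2
    refine B.ext_elem fun s => ?_
    rcases s with a | a
    · exact h1 a
    · exact h2 a
  have uhe : ∀ a i j, i ≠ j → u a (F (B (.inl i)) (B (.inr j))) = 0 := by
    intro a i j hij
    have h := cu a (B (.inl i)) (B (.inl j)) (B (.inr j))
    rw [hhh, hhe, hhe, if_neg hij, if_pos rfl, hskew (B (.inr j))] at h
    simpa using h
  have key : (F : L →ₗ[k] L →ₗ[k] L) =
      (LieModule.toEnd k L L : L →ₗ[k] Module.End k L).compl₂ G
      - ((LieModule.toEnd k L L : L →ₗ[k] Module.End k L).compl₂ G).flip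
      - (LieModule.toEnd k L L : L →ₗ[k] Module.End k L).compr₂ G := by
    refine B.ext fun s => B.ext fun t => ?_
    simp only [LinearMap.sub_apply, LinearMap.flip_apply, LinearMap.compl₂_apply,
      LinearMap.compr₂_apply, LieHom.coe_toLinearMap, LieModule.toEnd_apply_apply]
    rcases s with i | i <;> rcases t with j | j
    · refine hext _ _ (fun a => ?_) (fun a => ?_)
      · simp only [map_sub, hu, hhh, map_zero, sub_zero]
        have h := cv a (B (.inl i)) (B (.inl j)) (B (.inr a))
        rw [hhh, hhe, hhe] at h
        simp only [uh, ue, vh, ve, if_true, map_zero, LinearMap.zero_apply] at h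
        have h1 := congrArg (v a) (hskew (B (.inr a)) (B (.inl i)))
        have h2 := congrArg (v a) (hskew (B (.inr a)) (B (.inl j)))
        rw [map_neg] at h1 h2
        by_cases hia : i = a <;> by_cases hja : j = a <;>
          simp only [hia, hja, if_true, if_false, map_zero, LinearMap.zero_apply] at h h1 h2 ⊢
        · linear_combination -h
        · linear_combination -h + h2
        · linear_combination -h - h1
        · linear_combination -h
      · simp only [map_sub, hv, hhh, map_zero, sub_zero, uh, vh, vGh, uGh]
        have h := cv a (B (.inl a)) (B (.inl i)) (B (.inl j))
        simp only [hhh, uh, vh, map_zero, LinearMap.zero_apply] at h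
        simp only [if_true] at h
        linear_combination h
    · refine hext _ _ (fun a => ?_) (fun a => ?_)
      · simp only [map_sub, hu, hhe]
        split_ifs with hij
        · subst hij; simp [uGe]
        · simp [uhe a i j hij]
      · simp only [map_sub, hv, hhe, uh, vh, ue, ve, vGh, uGh, vGe]
        by_cases haj : j = a
        · subst haj
          by_cases hij : i = j
          · subst hij; simp [vGe]
          · simp [hij]
        · have h := cv a (B (.inl a)) (B (.inl i)) (B (.inr j))
          have h1 := congrArg (v a) (hskew (B (.inr j)) (B (.inl a)))
          rw [map_neg] at h1
          simp only [hhh, hhe, uh, vh, ue, ve, map_zero, LinearMap.zero_apply] at h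
          have haj' : ¬ a = j := fun h => haj h.symm
          simp only [haj, haj', if_false, if_true, map_zero, LinearMap.zero_apply] at h ⊢
          by_cases hij : i = j
          · simp only [hij, haj, if_true, if_false, vGe, haj'] at h ⊢
            linear_combination h + h1
          · simp only [hij, if_false, map_zero, LinearMap.zero_apply] at h ⊢
            linear_combination h
    · refine hext _ _ (fun a => ?_) (fun a => ?_)
      · rw [hskew]
        simp only [map_sub, hu, heh, map_neg]
        split_ifs with hij
        · subst hij; simp [uGe]
        · simp [uhe a j i hij]
      · rw [hskew]
        simp only [map_sub, hv, heh, uh, vh, ue, ve, vGh, uGh, vGe, map_neg]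
        by_cases haj : i = a
        · subst haj
          by_cases hij : j = i
          · subst hij; simp [vGe]
          · simp [hij]
        · have h := cv a (B (.inl a)) (B (.inl j)) (B (.inr i))
          have h1 := congrArg (v a) (hskew (B (.inr i)) (B (.inl a)))
          rw [map_neg] at h1
          simp only [hhh, hhe, uh, vh, ue, ve, map_zero, LinearMap.zero_apply] at h
          have haj' : ¬ a = i := fun h => haj h.symm
          simp only [haj, haj', if_false, if_true, map_zero, LinearMap.zero_apply] at h ⊢
          by_cases hij : j = i
          · simp only [hij, haj, if_true, if_false, vGe, haj', map_neg] at h ⊢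
            linear_combination -h - h1
          · simp only [hij, if_false, map_zero, LinearMap.zero_apply] at h ⊢
            linear_combination -h
    · by_cases hij : i = j
      · subst hij; simp [halt]
      have hji : ¬ j = i := fun h => hij h.symm
      refine hext _ _ (fun a => ?_) (fun a => ?_)
      · simp only [map_sub, hu, hee, map_zero, sub_zero]
        have h := cu a (B (.inl i)) (B (.inr i)) (B (.inr j))
        simpa [hhe, hee, hij] using h
      · simp only [map_sub, hv, hee, map_zero, sub_zero, ue, ve, uGe]
        by_cases hai : i = a
        · subst hai
          have h := cv i (B (.inl j)) (B (.inr i)) (B (.inr j))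
          simp only [hhe, hee, uh, ue, vh, ve, hij, hji, if_true, if_false, map_zero,
            LinearMap.zero_apply] at h ⊢
          have h1 := congrArg (v i) (hskew (B (.inr i)) (B (.inr j)))
          rw [map_neg] at h1
          linear_combination -h + h1
        · have h := cv a (B (.inl i)) (B (.inr i)) (B (.inr j))
          simp only [hhe, hee, uh, ue, vh, ve, hij, hai, if_true, if_false, map_zero,
            LinearMap.zero_apply] at h ⊢
          linear_combination -h
  refine ⟨G, fun x y => ?_⟩
  have := LinearMap.congr_fun₂ key x y
  simpa using this

theorem lemA {k V ι : Type*} [Field k] [IsAlgClosed k] [AddCommGroup V] [Module k V]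
    [FiniteDimensional k V] (T : ι → Module.End k V) (hc : ∀ i j, Commute (T i) (T j))
    (hs : ∀ i, (T i).IsSemisimple) :
    Submodule.span k {y : V | ∃ χ : ι → k, ∀ i, T i y = χ i • y} = ⊤ := by
  have h := Module.End.iSup_iInf_maxGenEigenspace_eq_top_of_iSup_maxGenEigenspace_eq_top_of_commute
    T (fun i j _ => hc i j) (fun i => Module.End.iSup_maxGenEigenspace_eq_top (T i))
  rw [eq_top_iff, ← h]
  refine iSup_le fun χ => fun y hy => Submodule.subset_span ⟨χ, fun i => ?_⟩
  have := (Submodule.mem_iInf _).1 hy i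
  rw [(hs i).isFinitelySemisimple.maxGenEigenspace_eq_eigenspace,
    Module.End.mem_eigenspace_iff] at this
  exact this

theorem lemC.{u, v} {k : Type u} {L : Type v} [Field k] [LieRing L] [LieAlgebra k L] [FiniteDimensional k L]
    (T : Submodule k L) (hab : ∀ s ∈ T, ∀ t ∈ T, ⁅s, t⁆ = 0)
    (hspan : Submodule.span k {y : L | ∃ χ : T → k, ∀ t : T, ⁅(t : L), y⁆ = χ t • y} = ⊤)
    (hcent : ∀ y : L, (∀ t ∈ T, ⁅t, y⁆ = 0) → y ∈ T)
    (h2 : ∀ a b c d : L, ⁅⁅a, b⁆, ⁅c, d⁆⁆ = 0)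
    (f : Module.Dual k L) (hf : ∀ y : L, (∀ x : L, f ⁅x, y⁆ = 0) → y = 0) :
    ∃ (ι : Type v) (_ : Fintype ι) (_ : DecidableEq ι) (B : Module.Basis (ι ⊕ ι) k L),
      (∀ i j, ⁅B (.inl i), B (.inl j)⁆ = 0) ∧
      (∀ i j, ⁅B (.inl i), B (.inr j)⁆ = if i = j then B (.inr j) else 0) ∧
      (∀ i j, ⁅B (.inr i), B (.inr j)⁆ = 0) := by
  classical
  let S : Set L := {y : L | (∃ χ : T → k, ∀ t : T, ⁅(t : L), y⁆ = χ t • y) ∧ ∃ a b : L, y = ⁅a, b⁆}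
  have htop : T ⊔ Submodule.span k S = ⊤ := by
    rw [eq_top_iff, ← hspan, Submodule.span_le]
    rintro y ⟨χ, hχ⟩
    by_cases h0 : ∀ t, χ t = 0
    · exact Submodule.mem_sup_left (hcent y fun t ht => by
        have := hχ ⟨t, ht⟩
        rw [h0, zero_smul] at this
        exact this)
    · push Not at h0
      obtain ⟨t, ht⟩ := h0
      refine Submodule.mem_sup_right (Submodule.subset_span ⟨⟨χ, hχ⟩, (χ t)⁻¹ • (t : L), y, ?_⟩)
      rw [smul_lie, hχ, smul_smul, inv_mul_cancel₀ ht, one_smul]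
  have hNab : ∀ x ∈ Submodule.span k S, ∀ y ∈ Submodule.span k S, ⁅x, y⁆ = 0 := by
    intro x hx y hy
    induction hx, hy using Submodule.span_induction₂ with
    | mem_mem x y hx hy =>
      obtain ⟨-, a, b, rfl⟩ := hx
      obtain ⟨-, c, d, rfl⟩ := hy
      exact h2 a b c d
    | zero_left => simp
    | zero_right => simp
    | add_left x y z _ _ _ h1 h2 => rw [add_lie, h1, h2, add_zero]
    | add_right x y z _ _ _ h1 h2 => rw [lie_add, h1, h2, add_zero]
    | smul_left r x y _ _ h => rw [smul_lie, h, smul_zero]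
    | smul_right r x y _ _ h => rw [lie_smul, h, smul_zero]
  have hdec : ∀ x : L, ∃ t ∈ T, ∃ n ∈ Submodule.span k S, t + n = x := fun x =>
    Submodule.mem_sup.1 (htop ▸ Submodule.mem_top)
  obtain ⟨b, hbS, hbspan, hbli⟩ := exists_linearIndependent k S
  have hfin : Finite b := hbli.finite
  have : Fintype b := Fintype.ofFinite b
  rw [← hbspan] at hNab hdec htop
  have hdisj : Disjoint T (Submodule.span k b) := by
    rw [Submodule.disjoint_def]
    intro x hxT hxN
    refine hf x fun y => ?_
    obtain ⟨t, ht, n, hn, rfl⟩ := hdec y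
    rw [add_lie, hab t ht x hxT, hNab n hn x hxN, add_zero, map_zero]
  let e : b → L := Subtype.val
  have heN : ∀ i, e i ∈ Submodule.span k b := fun i => Submodule.subset_span i.2
  choose χ hχ using fun i : b => (hbS i.2).1
  have hfe : ∀ i, f (e i) ≠ 0 := by
    intro i h0
    refine hbli.ne_zero i (hf _ fun x => ?_)
    obtain ⟨t, ht, n, hn, rfl⟩ := hdec x
    have h1 := hχ i ⟨t, ht⟩
    change ⁅t, (i : L)⁆ = _ at h1
    rw [add_lie, h1, hNab n hn _ (heN i), add_zero, map_smul]
    change _ • f (e i) = 0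
    rw [h0, smul_zero]
  let Φ : T →ₗ[k] (b → k) :=
    { toFun := fun t i => f ⁅(t : L), e i⁆
      map_add' := fun x y => by ext i; simp
      map_smul' := fun r x => by ext i; simp }
  have hΦ : ∀ t i, Φ t i = χ i t * f (e i) := by
    intro t i
    change f ⁅(t : L), (i : L)⁆ = _
    rw [hχ, map_smul, smul_eq_mul]
  have hΦinj : Function.Injective Φ := by
    rw [← LinearMap.ker_eq_bot, LinearMap.ker_eq_bot']
    intro t ht
    have hz : ∀ n ∈ Submodule.span k b, ⁅n, (t : L)⁆ = 0 := by
      intro n hn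
      induction hn using Submodule.span_induction with
      | mem x hx =>
        have h1 := congrFun ht ⟨x, hx⟩
        rw [hΦ] at h1
        have h3 : χ ⟨x, hx⟩ t = 0 := (mul_eq_zero.1 h1).resolve_right (hfe _)
        have h4 := hχ ⟨x, hx⟩ t
        rw [h3, zero_smul] at h4
        rw [← lie_skew, h4, neg_zero]
      | zero => simp
      | add x y _ _ h1 h2 => rw [add_lie, h1, h2, add_zero]
      | smul r x _ h => rw [smul_lie, h, smul_zero]
    refine Subtype.ext (hf _ fun x => ?_)
    obtain ⟨s, hs, n, hn, rfl⟩ := hdec x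
    rw [add_lie, hab s hs t t.2, hz n hn, add_zero, map_zero]
  let Ψ : Submodule.span k b →ₗ[k] Module.Dual k T :=
    LinearMap.mk₂ k (fun n t => f ⁅(t : L), (n : L)⁆) (by intros; simp) (by intros; simp)
      (by intros; simp) (by intros; simp)
  have hΨinj : Function.Injective Ψ := by
    rw [← LinearMap.ker_eq_bot, LinearMap.ker_eq_bot']
    intro n hn0
    refine Subtype.ext (hf _ fun x => ?_)
    obtain ⟨s, hs, n', hn, rfl⟩ := hdec x
    rw [add_lie, hNab n' hn n n.2, add_zero]
    exact LinearMap.congr_fun hn0 ⟨s, hs⟩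
  have hd1 := LinearMap.finrank_le_finrank_of_injective hΦinj
  have hd2 := LinearMap.finrank_le_finrank_of_injective hΨinj
  rw [Subspace.dual_finrank_eq] at hd2
  have hcard : Module.finrank k (Submodule.span k b) = Fintype.card b := by
    have := finrank_span_eq_card hbli
    rwa [Subtype.range_coe] at this
  rw [Module.finrank_fintype_fun_eq_card] at hd1
  rw [hcard] at hd2
  have heq : Module.finrank k T = Module.finrank k (b → k) := by
    rw [Module.finrank_fintype_fun_eq_card]; omega
  let Φe : T ≃ₗ[k] (b → k) := LinearEquiv.ofBijective Φ ⟨hΦinj,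
    (LinearMap.injective_iff_surjective_of_finrank_eq_finrank heq).1 hΦinj⟩
  let h : b → T := fun i => Φe.symm (Pi.single i (f (e i)))
  have hh : ∀ i j, χ j (h i) = if i = j then 1 else 0 := by
    intro i j
    have h1 : Φe (h i) j = Pi.single (M := fun _ => k) i (f (e i)) j := by
      rw [LinearEquiv.apply_symm_apply]
    change Φ (h i) j = _ at h1
    rw [hΦ, Pi.single_apply] at h1
    apply mul_right_cancel₀ (hfe j)
    rw [h1]
    by_cases hij : i = j
    · subst hij; simp
    · simp [hij, Ne.symm hij]
  have hhli : LinearIndependent k (fun i => (h i : L)) := by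
    have h1 : LinearIndependent k (fun i => Φe (h i)) := by
      rw [Fintype.linearIndependent_iff]
      intro g hg i
      have h2 := congrFun hg i
      simp only [h, LinearEquiv.apply_symm_apply, Finset.sum_apply, Pi.smul_apply, Pi.single_apply,
        smul_eq_mul, mul_ite, mul_zero, Finset.sum_ite_eq, Finset.mem_univ, if_true,
        Pi.zero_apply] at h2
      exact (mul_eq_zero.1 h2).resolve_right (hfe i)
    have h2 : LinearIndependent k h := LinearIndependent.of_comp Φe.toLinearMap h1
    exact h2.map' T.subtype (Submodule.ker_subtype T)
  have hhle : Submodule.span k (Set.range fun i => (h i : L)) ≤ T := by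
    rw [Submodule.span_le]
    rintro _ ⟨i, rfl⟩
    exact (h i).2
  have hhspan : Submodule.span k (Set.range fun i => (h i : L)) = T := by
    apply Submodule.eq_of_le_of_finrank_eq hhle
    rw [finrank_span_eq_card hhli, heq, Module.finrank_fintype_fun_eq_card]
  have hli : LinearIndependent k (Sum.elim (fun i => (h i : L)) e) := by
    refine hhli.sum_type hbli ?_
    rw [hhspan]
    change Disjoint T (Submodule.span k (Set.range Subtype.val))
    rw [Subtype.range_coe]; exact hdisj
  let B : Module.Basis (b ⊕ b) k L := Module.Basis.mk hli (by
    rw [Set.Sum.elim_range, Submodule.span_union, hhspan]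
    change _ ≤ T ⊔ (Submodule.span k (Set.range Subtype.val))
    rw [Subtype.range_coe, htop])
  refine ⟨b, inferInstance, inferInstance, B, ?_, ?_, ?_⟩
  · intro i j
    simp only [B, Module.Basis.mk_apply, Sum.elim_inl]
    exact hab _ (h i).2 _ (h j).2
  · intro i j
    simp only [B, Module.Basis.mk_apply, Sum.elim_inl, Sum.elim_inr]
    change ⁅(h i : L), (j : L)⁆ = _
    rw [hχ, hh]
    split_ifs <;> simp [e]
  · intro i j
    simp only [B, Module.Basis.mk_apply, Sum.elim_inr]
    exact hNab _ (heN i) _ (heN j)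

/-- **Rigidity theorem.**  A Frobenius, two-step solvable Lie poset algebra `p` (a Lie
subalgebra between a Cartan subalgebra and a Borel subalgebra of a finite-dimensional
semisimple Lie algebra over an algebraically closed field of characteristic zero) is
absolutely rigid: `H²(p, p) = 0`, i.e. every Chevalley–Eilenberg 2-cocycle of `p` with
coefficients in the adjoint representation is a 2-coboundary. -/
theorem frobenius_twoStepSolvable_liePoset_second_cohomology_trivial
    {k : Type*} [Field k] [IsAlgClosed k] [CharZero k]
    {g : Type*} [LieRing g] [LieAlgebra k g] [FiniteDimensional k g]
    [LieAlgebra.IsSemisimple k g]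
    (b : LieSubalgebra k g) (hb : IsBorelSubalgebra k b)
    (H : LieSubalgebra k g) [H.IsCartanSubalgebra] (hH : H ≤ b)
    (p : LieSubalgebra k g) (hpl : H ≤ p) (hpu : p ≤ b)
    (hF : IsFrobeniusLieAlgebra k ↥p) (hS : IsTwoStepSolvable k ↥p)
    (F : ↥p →ₗ[k] ↥p →ₗ[k] ↥p) (halt : ∀ x : ↥p, F x x = 0)
    (hcocycle : ∀ x y z : ↥p,
      ⁅x, F y z⁆ - ⁅y, F x z⁆ + ⁅z, F x y⁆ - F ⁅x, y⁆ z + F ⁅x, z⁆ y - F ⁅y, z⁆ x = 0) :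
    ∃ G : ↥p →ₗ[k] ↥p, ∀ x y : ↥p, F x y = ⁅x, G y⁆ - ⁅y, G x⁆ - G ⁅x, y⁆ := by
  obtain ⟨f, hf⟩ := hF
  let T : Submodule k p := H.toSubmodule.comap p.toSubmodule.subtype
  have hTmem : ∀ t : p, t ∈ T ↔ (t : g) ∈ H := fun t => Iff.rfl
  have hHab : ∀ s ∈ H, ∀ t ∈ H, ⁅s, t⁆ = 0 := by
    intro s hs t ht
    have h1 : ⁅(⟨s, hs⟩ : H), (⟨t, ht⟩ : H)⁆ = 0 := trivial_lie_zero _ _ _ _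
    exact congrArg Subtype.val h1
  have hab : ∀ s ∈ T, ∀ t ∈ T, ⁅s, t⁆ = 0 := fun s hs t ht => Subtype.ext (hHab s hs t ht)
  have hspan : Submodule.span k {y : p | ∃ χ : T → k, ∀ t : T, ⁅(t : p), y⁆ = χ t • y} = ⊤ := by
    refine lemA (fun t : T => LieAlgebra.ad k p (t : p)) ?_ ?_
    · intro s t
      refine LinearMap.ext fun y => ?_
      change ⁅(s : p), ⁅(t : p), y⁆⁆ = ⁅(t : p), ⁅(s : p), y⁆⁆
      rw [leibniz_lie, hab s s.2 t t.2, zero_lie, zero_add]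
    · intro t
      have h1 := LieAlgebra.IsKilling.isSemisimple_ad_of_mem_isCartanSubalgebra (K := k) (H := H)
        (x := ((t : p) : g)) t.2
      have hinv : p.toSubmodule ∈ Module.End.invtSubmodule (LieAlgebra.ad k g ((t : p) : g)) :=
        fun y hy => p.lie_mem (t : p).2 hy
      exact h1.restrict hinv
  have hcent : ∀ y : p, (∀ t ∈ T, ⁅t, y⁆ = 0) → y ∈ T := by
    intro y hy
    have : (y : g) ∈ H.normalizer := by
      rw [LieSubalgebra.mem_normalizer_iff']
      intro t ht
      have h1 := congrArg Subtype.val (hy ⟨t, hpl ht⟩ ht)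
      change ⁅t, (y : g)⁆ = 0 at h1
      rw [h1]; exact H.zero_mem
    rwa [LieSubalgebra.IsCartanSubalgebra.self_normalizing] at this
  have h2 : ∀ a b c d : p, ⁅⁅a, b⁆, ⁅c, d⁆⁆ = 0 := by
    intro a b c d
    have h1 : ∀ x y : p, ⁅x, y⁆ ∈ LieAlgebra.derivedSeries k p 1 := by
      intro x y
      rw [LieAlgebra.derivedSeries_def, LieAlgebra.derivedSeriesOfIdeal_succ]
      exact LieSubmodule.lie_mem_lie (LieSubmodule.mem_top x) (LieSubmodule.mem_top y)
    have h3 : ⁅⁅a, b⁆, ⁅c, d⁆⁆ ∈ LieAlgebra.derivedSeries k p 2 := by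
      rw [LieAlgebra.derivedSeries_def, LieAlgebra.derivedSeriesOfIdeal_succ]
      exact LieSubmodule.lie_mem_lie (h1 a b) (h1 c d)
    rw [hS.2] at h3
    exact (LieSubmodule.mem_bot _).1 h3
  obtain ⟨ι, _, _, B, hhh, hhe, hee⟩ := lemC T hab hspan hcent h2 f hf
  exact lemB B hhh hhe hee F halt hcocycle
end
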